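/- arXiv:2208.05954 — 3 statements merged into one kernel-verified Lean document; each statement's English description precedes it below -/
import Mathlib

section
/- Let I ⊆ ℝ be an open interval, s₀ ∈ I, and n ≥ 1. Let U, V : I → Mₙ(ℝ) be continuous with U(s) and V(s) orthogonal for every s ∈ I, let σ₁, …, σₙ : I → ℝ be continuous, and set A(s) = U(s)·diag(σ₁(s), …, σₙ(s))·V(s)ᵀ. Assume σₙ(s₀) = 0 and σᵢ(s₀) ≠ 0 for 1 ≤ i ≤ n−1. Then there exist δ > 0 and ε ∈ {−1, 1} such that for all s with |s−s₀| < δ one has sgn(det A(s)) · min_{1≤i≤n} |σᵢ(s)| = ε·σₙ(s), where sgn(x) = 1, 0, −1 according to x > 0, x = 0, x < 0. Consequently, if the σᵢ are real-analytic, the function s ↦ sgn(det A(s))·min_i |σᵢ(s)| is real-analytic in a neighborhood of s₀ even though min_i |σᵢ(s)| itself has a slope discontinuity at s₀. -/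
open Matrix

/-!
Splitting off the factor `σ i₀`, write `det A = d * σ i₀` with
`d = det U * (∏_{i ≠ i₀} σ i) * det V`. The cofactor `d` is continuous and does not vanish at `s₀`,
so its sign is locally constant, while near `s₀` the minimum of the `|σ i|` is `|σ i₀|`. Hence
`sign (det A) * min |σ i| = sign d * (sign (σ i₀) * |σ i₀|) = sign (d s₀) * σ i₀` near `s₀`.
-/

open Filter Topology

theorem real_sign_eq_coe_sign (x : ℝ) : Real.sign x = (SignType.sign x : ℝ) := by
  rcases lt_trichotomy x 0 with hneg | rfl | hpos
  · simp [Real.sign_of_neg hneg, sign_neg hneg]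
  · simp
  · simp [Real.sign_of_pos hpos, sign_pos hpos]

theorem real_sign_mul (x y : ℝ) : Real.sign (x * y) = Real.sign x * Real.sign y := by
  simp only [real_sign_eq_coe_sign, sign_mul, SignType.coe_mul]

theorem real_sign_mul_abs (x : ℝ) : Real.sign x * |x| = x := by
  rw [real_sign_eq_coe_sign, sign_mul_abs]

section LocalBehaviour

variable {X α ι : Type*} [TopologicalSpace X] [LinearOrder α] [TopologicalSpace α] {x₀ : X}

theorem eventually_sign_eq_of_ne_zero [Zero α] [OrderTopology α] {f : X → α}
    (hf : ContinuousAt f x₀) (h₀ : f x₀ ≠ 0) :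
    ∀ᶠ x in 𝓝 x₀, SignType.sign (f x) = SignType.sign (f x₀) :=
  ((continuousAt_sign_of_ne_zero h₀).comp hf).eventually
    ((isOpen_discrete {SignType.sign (f x₀)}).mem_nhds rfl)

theorem eventually_inf'_eq_of_lt [OrderClosedTopology α] {t : Finset ι} {f : ι → X → α} {i₀ : ι}
    (hi₀ : i₀ ∈ t) (hf : ∀ i ∈ t, ContinuousAt (f i) x₀)
    (hlt : ∀ i ∈ t, i ≠ i₀ → f i₀ x₀ < f i x₀) :
    ∀ᶠ x in 𝓝 x₀, (t.inf' ⟨i₀, hi₀⟩ fun i => f i x) = f i₀ x := by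
  have hle : ∀ᶠ x in 𝓝 x₀, ∀ i ∈ t, f i₀ x ≤ f i x := by
    refine (eventually_all_finset t).2 fun i hi => ?_
    rcases eq_or_ne i i₀ with rfl | hne
    · exact .of_forall fun _ => le_rfl
    · exact ((hf i₀ hi₀).eventually_lt (hf i hi) (hlt i hi hne)).mono fun _ => le_of_lt
  filter_upwards [hle] with x hx
  exact le_antisymm (Finset.inf'_le _ hi₀) (Finset.le_inf' _ _ hx)

end LocalBehaviour

section CofactorDet

variable {ι R : Type*} [Fintype ι] [DecidableEq ι] [CommRing R]

/-- The factor of `det (U * diagonal d * Vᵀ)` complementary to the entry `d i₀`. It does not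
depend on `d i₀`, and is defined without dividing by it. -/
def cofactorDet (U V : Matrix ι ι R) (d : ι → R) (i₀ : ι) : R :=
  U.det * (∏ i ∈ Finset.univ.erase i₀, d i) * V.det

theorem det_mul_diagonal_mul_transpose (U V : Matrix ι ι R) (d : ι → R) (i₀ : ι) :
    (U * diagonal d * Vᵀ).det = cofactorDet U V d i₀ * d i₀ := by
  rw [det_mul, det_mul, det_diagonal, det_transpose, cofactorDet,
    ← Finset.prod_erase_mul _ d (Finset.mem_univ i₀)]
  ring

theorem cofactorDet_ne_zero [IsDomain R] {U V : Matrix ι ι R} {d : ι → R} {i₀ : ι}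
    (hU : U.det ≠ 0) (hV : V.det ≠ 0) (hd : ∀ i, i ≠ i₀ → d i ≠ 0) :
    cofactorDet U V d i₀ ≠ 0 :=
  mul_ne_zero (mul_ne_zero hU <|
    Finset.prod_ne_zero_iff.2 fun i hi => hd i (Finset.ne_of_mem_erase hi)) hV

theorem continuousAt_cofactorDet {X : Type*} [TopologicalSpace X] [TopologicalSpace R]
    [IsTopologicalRing R] {U V : X → Matrix ι ι R} {d : ι → X → R} {i₀ : ι} {x₀ : X}
    (hU : ContinuousAt U x₀) (hV : ContinuousAt V x₀)
    (hd : ∀ i, i ≠ i₀ → ContinuousAt (d i) x₀) :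
    ContinuousAt (fun x => cofactorDet (U x) (V x) (fun i => d i x) i₀) x₀ := by
  have hdet {M : X → Matrix ι ι R} (hM : ContinuousAt M x₀) :
      ContinuousAt (fun x => (M x).det) x₀ :=
    continuous_id.matrix_det.continuousAt.comp hM
  have hprod : ContinuousAt (fun x => ∏ i ∈ Finset.univ.erase i₀, d i x) x₀ :=
    tendsto_finsetProd _ fun i hi => hd i (Finset.ne_of_mem_erase hi)
  exact ((hdet hU).mul hprod).mul (hdet hV)

end CofactorDet

theorem exists_Ioo_subset_analyticOnNhd {F : Type*} [NormedAddCommGroup F] [NormedSpace ℝ F]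
    [CompleteSpace F] {f : ℝ → F} {x : ℝ} {t : Set ℝ} (hf : AnalyticAt ℝ f x) (ht : t ∈ 𝓝 x) :
    ∃ δ > 0, Set.Ioo (x - δ) (x + δ) ⊆ t ∧ AnalyticOnNhd ℝ f (Set.Ioo (x - δ) (x + δ)) := by
  obtain ⟨δ, hδ, hball⟩ := Metric.eventually_nhds_iff_ball.1
    ((eventually_mem_set.2 ht).and hf.eventually_analyticAt)
  rw [Real.ball_eq_Ioo] at hball
  exact ⟨δ, hδ, fun y hy => (hball y hy).1, fun y hy => (hball y hy).2⟩

section SignedMin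

variable {ι : Type*} [Fintype ι] [DecidableEq ι] {i₀ : ι}

theorem sign_det_mul_inf'_abs_eventuallyEq {X : Type*} [TopologicalSpace X] {s₀ : X}
    {U V A : X → Matrix ι ι ℝ} {σ : ι → X → ℝ}
    (hUc : ContinuousAt U s₀) (hVc : ContinuousAt V s₀) (hσc : ∀ i, ContinuousAt (σ i) s₀)
    (hA : ∀ᶠ s in 𝓝 s₀, A s = U s * diagonal (fun i => σ i s) * (V s)ᵀ)
    (hcof : cofactorDet (U s₀) (V s₀) (fun i => σ i s₀) i₀ ≠ 0)
    (hlt : ∀ i, i ≠ i₀ → |σ i₀ s₀| < |σ i s₀|) :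
    (fun s => Real.sign (A s).det *
        (Finset.univ.inf' ⟨i₀, Finset.mem_univ i₀⟩ fun i => |σ i s|)) =ᶠ[𝓝 s₀]
      fun s => Real.sign (cofactorDet (U s₀) (V s₀) (fun i => σ i s₀) i₀) * σ i₀ s := by
  have hsign := eventually_sign_eq_of_ne_zero
    (continuousAt_cofactorDet hUc hVc fun i _ => hσc i) hcof
  have hmin := eventually_inf'_eq_of_lt (Finset.mem_univ i₀)
    (fun i _ => (hσc i).abs) (fun i _ => hlt i)
  filter_upwards [hA, hsign, hmin] with s hAs hsigns hmins
  rw [hmins, hAs, det_mul_diagonal_mul_transpose _ _ _ i₀, real_sign_mul, mul_assoc,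
    real_sign_mul_abs, real_sign_eq_coe_sign, hsigns, ← real_sign_eq_coe_sign]

theorem signed_min_singular_value_smooth_general {E : Type*} [NormedAddCommGroup E]
    [NormedSpace ℝ E] {s₀ : E} {U V A : E → Matrix ι ι ℝ} {σ : ι → E → ℝ}
    (hUc : ContinuousAt U s₀) (hVc : ContinuousAt V s₀)
    (hU : (U s₀).det ≠ 0) (hV : (V s₀).det ≠ 0) (hσc : ∀ i, ContinuousAt (σ i) s₀)
    (hA : ∀ᶠ s in 𝓝 s₀, A s = U s * diagonal (fun i => σ i s) * (V s)ᵀ)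
    (hlt : ∀ i, i ≠ i₀ → |σ i₀ s₀| < |σ i s₀|) :
    (∃ ε : ℝ, (ε = 1 ∨ ε = -1) ∧
      (fun s => Real.sign (A s).det *
        (Finset.univ.inf' ⟨i₀, Finset.mem_univ i₀⟩ fun i => |σ i s|)) =ᶠ[𝓝 s₀]
          fun s => ε * σ i₀ s) ∧
    (AnalyticAt ℝ (σ i₀) s₀ → AnalyticAt ℝ
      (fun s => Real.sign (A s).det *
        (Finset.univ.inf' ⟨i₀, Finset.mem_univ i₀⟩ fun i => |σ i s|)) s₀) := by
  have hcof : cofactorDet (U s₀) (V s₀) (fun i => σ i s₀) i₀ ≠ 0 :=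
    cofactorDet_ne_zero hU hV fun i hi => abs_pos.1 ((abs_nonneg _).trans_lt (hlt i hi))
  have heq := sign_det_mul_inf'_abs_eventuallyEq hUc hVc hσc hA hcof hlt
  exact ⟨⟨_, (Real.sign_apply_eq_of_ne_zero _ hcof).symm, heq⟩,
    fun hσ => (analyticAt_const.mul hσ).congr heq.symm⟩

end SignedMin

/-- Suppose `A(s) = U(s)·diag(σ₁(s),…,σₙ(s))·V(s)ᵀ` on an open interval, with `U`, `V`
continuous and orthogonal and the `σᵢ` continuous, and suppose at `s₀` the last `σ` vanishes
while all the others are nonzero.  Then near `s₀` the signed smallest singular value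
`sgn(det A(s))·minᵢ|σᵢ(s)|` equals `ε·σₙ(s)` for a fixed sign `ε ∈ {−1,1}`; consequently, if
the `σᵢ` are real-analytic then this signed smallest singular value is real-analytic in a
neighborhood of `s₀`, even though `minᵢ|σᵢ(s)|` itself has a slope discontinuity at `s₀`. -/
theorem signed_min_singular_value_smooth (m : ℕ) (a b s₀ : ℝ)
    (hs₀ : s₀ ∈ Set.Ioo a b)
    (U V : ℝ → Matrix (Fin (m + 1)) (Fin (m + 1)) ℝ)
    (hUc : ContinuousOn U (Set.Ioo a b)) (hVc : ContinuousOn V (Set.Ioo a b))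
    (hU : ∀ s ∈ Set.Ioo a b, (U s)ᵀ * U s = 1)
    (hV : ∀ s ∈ Set.Ioo a b, (V s)ᵀ * V s = 1)
    (σ : Fin (m + 1) → ℝ → ℝ)
    (hσc : ∀ i, ContinuousOn (σ i) (Set.Ioo a b))
    (A : ℝ → Matrix (Fin (m + 1)) (Fin (m + 1)) ℝ)
    (hA : ∀ s, A s = U s * Matrix.diagonal (fun i => σ i s) * (V s)ᵀ)
    (hlast : σ (Fin.last m) s₀ = 0)
    (hother : ∀ i : Fin (m + 1), i ≠ Fin.last m → σ i s₀ ≠ 0) :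
    (∃ δ > 0, ∃ ε : ℝ, (ε = 1 ∨ ε = -1) ∧
      ∀ s ∈ Set.Ioo a b, |s - s₀| < δ →
        Real.sign (A s).det *
            (Finset.univ.inf' Finset.univ_nonempty fun i : Fin (m + 1) => |σ i s|) =
          ε * σ (Fin.last m) s) ∧
    ((∀ i, AnalyticOnNhd ℝ (σ i) (Set.Ioo a b)) →
      ∃ δ > 0, Set.Ioo (s₀ - δ) (s₀ + δ) ⊆ Set.Ioo a b ∧
        AnalyticOnNhd ℝ
          (fun s => Real.sign (A s).det *
            (Finset.univ.inf' Finset.univ_nonempty fun i : Fin (m + 1) => |σ i s|))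
          (Set.Ioo (s₀ - δ) (s₀ + δ))) := by
  have hI : Set.Ioo a b ∈ 𝓝 s₀ := Ioo_mem_nhds hs₀.1 hs₀.2
  have hlt : ∀ i, i ≠ Fin.last m → |σ (Fin.last m) s₀| < |σ i s₀| := fun i hi => by
    simpa only [hlast, abs_zero] using abs_pos.2 (hother i hi)
  obtain ⟨⟨ε, hε, heq⟩, han⟩ := signed_min_singular_value_smooth_general
    (hUc.continuousAt hI) (hVc.continuousAt hI)
    (isUnit_det_of_left_inverse (hU s₀ hs₀)).ne_zero
    (isUnit_det_of_left_inverse (hV s₀ hs₀)).ne_zero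
    (fun i => (hσc i).continuousAt hI) (.of_forall hA) hlt
  obtain ⟨δ, hδ, hball⟩ := Metric.eventually_nhds_iff.1 heq
  exact ⟨⟨δ, hδ, ε, hε, fun s _ hs => hball hs⟩,
    fun hσ => exists_Ioo_subset_analyticOnNhd (han (hσ _ s₀ hs₀)) hI⟩
end

section
/- With η, ξ, J, κ and the linear map L as in the boundedness setup (η(α₁,α₂) = η̃(α₁) periodic, real-valued, with J nonvanishing), fix integers l₁, l₂ and let η̇(α₁,α₂) = e^{i(l₁α₁ + l₂α₂)}. Then there exists a 2π-periodic function u of one variable such that L(η̇, 0, 0)(α₁,α₂) = u(α₁)·e^{i l₂ α₂}; equivalently, every Fourier coefficient of L(η̇, 0, 0) with second index different from l₂ vanishes. Hence L leaves each Bloch subspace {f : f̂(j₁,j₂) = 0 for j₂ ≠ l₂} invariant when linearizing about a periodic state. -/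
open MeasureTheory

noncomputable section

/-- Fourier coefficient `f̂(j₁,j₂)` of a `2π×2π`-periodic function on `ℝ²`. -/
def fcoeff (f : ℝ × ℝ → ℂ) (j : ℤ × ℤ) : ℂ :=
  (((2 * Real.pi) ^ 2 : ℝ) : ℂ)⁻¹ *
    ∫ a in (0 : ℝ)..(2 * Real.pi), ∫ c in (0 : ℝ)..(2 * Real.pi),
      f (a, c) * Complex.exp (-Complex.I * ((j.1 : ℂ) * (a : ℂ) + (j.2 : ℂ) * (c : ℂ)))

/-- Membership in the space `V_σ`: `Σ |f̂(j₁,j₂)|²·e^{2σ(|j₁|+|j₂|)} < ∞`. -/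
def MemVF (σ : ℝ) (f : ℝ × ℝ → ℂ) : Prop :=
  Summable fun j : ℤ × ℤ => ‖fcoeff f j‖ ^ 2 * Real.exp (2 * σ * (|(j.1 : ℝ)| + |(j.2 : ℝ)|))

/-- The norm of the space `V_σ`: `‖f‖² = Σ |f̂(j₁,j₂)|²·e^{2σ(|j₁|+|j₂|)}`. -/
def VnormF (σ : ℝ) (f : ℝ × ℝ → ℂ) : ℝ :=
  Real.sqrt (∑' j : ℤ × ℤ, ‖fcoeff f j‖ ^ 2 * Real.exp (2 * σ * (|(j.1 : ℝ)| + |(j.2 : ℝ)|)))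

/-- The quasi-periodic Hilbert transform: the Fourier multiplier sending `f̂(j₁,j₂)` to
`(−i)·sgn(j₁ + k·j₂)·f̂(j₁,j₂)`. -/
def Hqp (k : ℝ) (f : ℝ × ℝ → ℂ) : ℝ × ℝ → ℂ := fun x =>
  ∑' j : ℤ × ℤ,
    (-Complex.I) * ((Real.sign ((j.1 : ℝ) + k * (j.2 : ℝ)) : ℝ) : ℂ) * fcoeff f j *
      Complex.exp (Complex.I * ((j.1 : ℂ) * (x.1 : ℂ) + (j.2 : ℂ) * (x.2 : ℂ)))

/-- The directional derivative `∂_α = ∂_{α₁} + k·∂_{α₂}` on torus functions. -/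
def dA (k : ℝ) (f : ℝ × ℝ → ℂ) : ℝ × ℝ → ℂ := fun x => fderiv ℝ f x (1, k)

/-- The mean `P₀ f` of a torus function over `[0,2π]²`. -/
def meanT (f : ℝ × ℝ → ℂ) : ℂ :=
  (((2 * Real.pi) ^ 2 : ℝ) : ℂ)⁻¹ *
    ∫ a in (0 : ℝ)..(2 * Real.pi), ∫ c in (0 : ℝ)..(2 * Real.pi), f (a, c)

/-- The projection `P = id − P₀` removing the mean. -/
def Pproj (f : ℝ × ℝ → ℂ) : ℝ × ℝ → ℂ := fun x => f x - meanT f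

/-- `J = (1 + ∂_αξ)² + (∂_αη)²` with `ξ = H[η]`. -/
def JF (k : ℝ) (η : ℝ × ℝ → ℂ) : ℝ × ℝ → ℂ := fun x =>
  (1 + dA k (Hqp k η) x) ^ 2 + dA k η x ^ 2

/-- `κ = ((1+∂_αξ)·∂_α²η − (∂_αη)·∂_α²ξ)/J^{3/2}` with `ξ = H[η]`. -/
def kappaF (k : ℝ) (η : ℝ × ℝ → ℂ) : ℝ × ℝ → ℂ := fun x =>
  ((1 + dA k (Hqp k η) x) * dA k (dA k η) x - dA k η x * dA k (dA k (Hqp k η)) x) /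
    JF k η x ^ ((3 : ℂ) / 2)

/-- `J̇ = 2[(1+∂_αξ)·∂_αξ̇ + (∂_αη)·(∂_αη̇)]` with `ξ = H[η]`, `ξ̇ = H[η̇]`. -/
def JdotF (k : ℝ) (η ηd : ℝ × ℝ → ℂ) : ℝ × ℝ → ℂ := fun x =>
  2 * ((1 + dA k (Hqp k η) x) * dA k (Hqp k ηd) x + dA k η x * dA k ηd x)

/-- `κ̇ = −(3κ/(2J))·J̇ + J^{−3/2}[(∂_α²η)(∂_αξ̇) + (1+∂_αξ)(∂_α²η̇)
      − (∂_α²ξ)(∂_αη̇) − (∂_αη)(∂_α²ξ̇)]`. -/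
def kappadotF (k : ℝ) (η ηd : ℝ × ℝ → ℂ) : ℝ × ℝ → ℂ := fun x =>
  -(3 * kappaF k η x / (2 * JF k η x)) * JdotF k η ηd x +
    (JF k η x ^ ((3 : ℂ) / 2))⁻¹ *
      (dA k (dA k η) x * dA k (Hqp k ηd) x
        + (1 + dA k (Hqp k η) x) * dA k (dA k ηd) x
        - dA k (dA k (Hqp k η)) x * dA k ηd x
        - dA k η x * dA k (dA k (Hqp k ηd)) x)

/-- The linearized traveling-wave operator
`L(η̇, τ̇, ḃ) = P[ ḃ/(2J) − (b/(2J²))·J̇ + g·η̇ − τ·κ̇ − κ·τ̇ ]`. -/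
def Lmap (k g τ b : ℝ) (η ηd : ℝ × ℝ → ℂ) (τd bd : ℂ) : ℝ × ℝ → ℂ :=
  Pproj fun x =>
    bd / (2 * JF k η x) - ((b : ℂ) / (2 * JF k η x ^ 2)) * JdotF k η ηd x
      + (g : ℂ) * ηd x - (τ : ℂ) * kappadotF k η ηd x - kappaF k η x * τd

/-!
A function `u(α₁) e^{i l α₂}` with `u` periodic is one that translation in `α₂` multiplies by the
character `e^{i l t}` and translation by `2π` in `α₁` leaves fixed.  Differentiation commutes with
translations and Fourier multipliers act on each frequency separately, so both keep the index `l`.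
The product of functions of indices `m` and `n` has index `m + n`, and a pointwise function of
functions of index `0` again has index `0`.  About a state of index `0`, the linearization is a
combination of derivatives of `η̇` and of `H[η̇]` with coefficients of index `0`.  The mean
subtracted by `P` is zero unless `l = 0`, in which case constants have index `l`.
-/

/-- The Bloch subspace of index `l`: the functions `u(α₁) e^{i l α₂}` with `u` of period `2π`.
No regularity is imposed on `u`. -/
def blochSubspace (l : ℤ) : Submodule ℂ (ℝ × ℝ → ℂ) where
  carrier := {f | ∃ u : ℝ → ℂ, Function.Periodic u (2 * Real.pi) ∧
    ∀ x : ℝ × ℝ, f x = u x.1 * Complex.exp (Complex.I * (l : ℂ) * (x.2 : ℂ))}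
  zero_mem' := ⟨0, fun _ => rfl, fun _ => (zero_mul _).symm⟩
  add_mem' := by
    rintro f h ⟨u, hu, hf⟩ ⟨v, hv, hh⟩
    exact ⟨u + v, hu.add hv, fun x => by simp [hf, hh, add_mul]⟩
  smul_mem' := by
    rintro c f ⟨u, hu, hf⟩
    exact ⟨c • u, hu.smul c, fun x => by simp [hf, mul_assoc]⟩

section BlochSubspace

variable {l m n : ℤ} {f h : ℝ × ℝ → ℂ}

theorem mem_blochSubspace_iff_translation :
    f ∈ blochSubspace l ↔
      (∀ (x : ℝ × ℝ) (t : ℝ),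
        f (x + (0, t)) = Complex.exp (Complex.I * (l : ℂ) * (t : ℂ)) * f x) ∧
      ∀ x : ℝ × ℝ, f (x + (2 * Real.pi, 0)) = f x := by
  constructor
  · rintro ⟨u, hu, hf⟩
    refine ⟨fun x t => ?_, fun x => ?_⟩
    · simp only [hf, Prod.fst_add, Prod.snd_add, add_zero, Complex.ofReal_add, mul_add,
        Complex.exp_add]
      ring
    · simp only [hf, Prod.fst_add, Prod.snd_add, add_zero, hu x.1]
  · rintro ⟨hvert, hhor⟩
    refine ⟨fun a => f (a, 0), fun a => by simpa using hhor (a, 0), fun x => ?_⟩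
    simpa [mul_comm] using hvert (x.1, 0) x.2

theorem planeWave_mem_blochSubspace (l₁ l₂ : ℤ) :
    (fun x : ℝ × ℝ =>
      Complex.exp (Complex.I * ((l₁ : ℂ) * (x.1 : ℂ) + (l₂ : ℂ) * (x.2 : ℂ)))) ∈
        blochSubspace l₂ := by
  refine ⟨fun a => Complex.exp (Complex.I * ((l₁ : ℂ) * (a : ℂ))), fun a => ?_, fun x => ?_⟩
  · rw [Complex.exp_eq_exp_iff_exists_int]
    exact ⟨l₁, by push_cast; ring⟩
  · simp only [mul_add, Complex.exp_add, mul_assoc]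

theorem contDiff_planeWave {r : WithTop ℕ∞} (l₁ l₂ : ℤ) :
    ContDiff ℝ r fun x : ℝ × ℝ =>
      Complex.exp (Complex.I * ((l₁ : ℂ) * (x.1 : ℂ) + (l₂ : ℂ) * (x.2 : ℂ))) := by
  have contDiff_ofReal : ContDiff ℝ r (fun t : ℝ => (t : ℂ)) := Complex.ofRealCLM.contDiff
  have hfst := contDiff_ofReal.comp (contDiff_fst (E := ℝ) (F := ℝ))
  have hsnd := contDiff_ofReal.comp (contDiff_snd (E := ℝ) (F := ℝ))
  exact (contDiff_const.mul
    ((contDiff_const.mul hfst).add (contDiff_const.mul hsnd))).cexp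

theorem mul_mem_blochSubspace (hf : f ∈ blochSubspace m) (hh : h ∈ blochSubspace n) :
    f * h ∈ blochSubspace (m + n) := by
  obtain ⟨u, hu, hf⟩ := hf
  obtain ⟨v, hv, hh⟩ := hh
  refine ⟨u * v, hu.mul hv, fun x => ?_⟩
  simp only [Pi.mul_apply, hf, hh, Int.cast_add, mul_add, add_mul, Complex.exp_add]
  ring

theorem zero_mul_mem_blochSubspace (hf : f ∈ blochSubspace 0) (hh : h ∈ blochSubspace l) :
    (fun x => f x * h x) ∈ blochSubspace l :=
  zero_add l ▸ mul_mem_blochSubspace hf hh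

theorem mem_blochSubspace_zero_iff :
    f ∈ blochSubspace 0 ↔
      ∃ u : ℝ → ℂ, Function.Periodic u (2 * Real.pi) ∧ ∀ x : ℝ × ℝ, f x = u x.1 := by
  simp [blochSubspace]

theorem comp₂_mem_blochSubspace_zero (φ : ℂ → ℂ → ℂ) (hf : f ∈ blochSubspace 0)
    (hh : h ∈ blochSubspace 0) : (fun x => φ (f x) (h x)) ∈ blochSubspace 0 := by
  rw [mem_blochSubspace_zero_iff] at *
  obtain ⟨u, hu, hf⟩ := hf
  obtain ⟨v, hv, hh⟩ := hh
  exact ⟨fun a => φ (u a) (v a), fun a => by simp only [hu a, hv a], fun x => by rw [hf, hh]⟩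

theorem comp_mem_blochSubspace_zero (φ : ℂ → ℂ) (hf : f ∈ blochSubspace 0) :
    (fun x => φ (f x)) ∈ blochSubspace 0 :=
  comp₂_mem_blochSubspace_zero (fun z _ => φ z) hf hf

theorem const_mem_blochSubspace_zero (c : ℂ) : (fun _ => c) ∈ blochSubspace 0 :=
  comp_mem_blochSubspace_zero (fun _ => c) (zero_mem _)

theorem tsum_mem_blochSubspace {ι : Type*} {F : ι → ℝ × ℝ → ℂ}
    (hF : ∀ i, F i ∈ blochSubspace l) : (fun x => ∑' i, F i x) ∈ blochSubspace l := by
  choose u hu hFu using hF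
  exact ⟨fun a => ∑' i, u i a, fun a => tsum_congr fun i => hu i a,
    fun x => by simp only [hFu, tsum_mul_right]⟩

end BlochSubspace

section FourierMultiplier

variable {l : ℤ} {f : ℝ × ℝ → ℂ}

theorem integral_exp_I_mul_int_mul {n : ℤ} (hn : n ≠ 0) :
    ∫ c in (0 : ℝ)..(2 * Real.pi), Complex.exp (Complex.I * (n : ℂ) * (c : ℂ)) = 0 := by
  have hIn : Complex.I * (n : ℂ) ≠ 0 := mul_ne_zero Complex.I_ne_zero (Int.cast_ne_zero.2 hn)
  have hexp : Complex.exp (Complex.I * (n : ℂ) * ((2 * Real.pi : ℝ) : ℂ)) = 1 :=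
    Complex.exp_eq_one_iff.2 ⟨n, by push_cast; ring⟩
  rw [integral_exp_mul_complex hIn, hexp]
  simp

theorem fcoeff_eq_zero_of_mem_blochSubspace (hf : f ∈ blochSubspace l) {j : ℤ × ℤ}
    (hj : j.2 ≠ l) : fcoeff f j = 0 := by
  obtain ⟨u, -, hf⟩ := hf
  have integrand_eq (a c : ℝ) :
      f (a, c) * Complex.exp (-Complex.I * ((j.1 : ℂ) * (a : ℂ) + (j.2 : ℂ) * (c : ℂ))) =
        u a * Complex.exp (-Complex.I * ((j.1 : ℂ) * (a : ℂ))) *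
          Complex.exp (Complex.I * ((l - j.2 : ℤ) : ℂ) * (c : ℂ)) := by
    simp only [hf, mul_assoc (u a), ← Complex.exp_add]
    congr 2
    push_cast
    ring
  simp only [fcoeff, integrand_eq, intervalIntegral.integral_const_mul,
    integral_exp_I_mul_int_mul (sub_ne_zero.2 hj.symm), mul_zero, intervalIntegral.integral_zero]

theorem Hqp_mem_blochSubspace (k : ℝ) (hf : f ∈ blochSubspace l) :
    Hqp k f ∈ blochSubspace l := by
  refine tsum_mem_blochSubspace fun j => ?_
  by_cases hj : j.2 = l
  · exact hj ▸ Submodule.smul_mem _ _ (planeWave_mem_blochSubspace j.1 j.2)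
  · simp only [fcoeff_eq_zero_of_mem_blochSubspace hf hj, mul_zero, zero_mul]
    exact zero_mem _

theorem meanT_eq_fcoeff_zero (f : ℝ × ℝ → ℂ) : meanT f = fcoeff f 0 := by
  simp [meanT, fcoeff]

theorem Pproj_mem_blochSubspace (hf : f ∈ blochSubspace l) : Pproj f ∈ blochSubspace l := by
  refine sub_mem (x := f) (y := fun _ => meanT f) hf ?_
  rcases eq_or_ne l 0 with rfl | hl
  · exact const_mem_blochSubspace_zero _
  · rw [meanT_eq_fcoeff_zero, fcoeff_eq_zero_of_mem_blochSubspace hf hl.symm]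
    exact zero_mem _

end FourierMultiplier

section Derivative

theorem dA_add_of_forall_add {k : ℝ} {f : ℝ × ℝ → ℂ} {v : ℝ × ℝ} {c : ℂ}
    (hf : ∀ x, f (x + v) = c * f x) (x : ℝ × ℝ) : dA k f (x + v) = c * dA k f x := by
  have translate_eq : (fun y => f (y + v)) = c • f := funext hf
  rw [dA, ← fderiv_comp_add_right, translate_eq, fderiv_const_smul_field]
  rfl

theorem dA_mem_blochSubspace {l : ℤ} (k : ℝ) {f : ℝ × ℝ → ℂ} (hf : f ∈ blochSubspace l) :
    dA k f ∈ blochSubspace l := by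
  rw [mem_blochSubspace_iff_translation] at hf ⊢
  refine ⟨fun x t => dA_add_of_forall_add (fun y => hf.1 y t) x, fun x => ?_⟩
  simpa using dA_add_of_forall_add (k := k) (c := 1) (fun y => by simpa using hf.2 y) x

end Derivative

section Linearization

variable {l : ℤ} (k : ℝ) {η ηd : ℝ × ℝ → ℂ}

theorem one_add_dA_Hqp_mem_blochSubspace (hη : η ∈ blochSubspace 0) :
    (fun x => 1 + dA k (Hqp k η) x) ∈ blochSubspace 0 :=
  comp_mem_blochSubspace_zero (1 + ·) (dA_mem_blochSubspace k (Hqp_mem_blochSubspace k hη))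

theorem JF_mem_blochSubspace (hη : η ∈ blochSubspace 0) : JF k η ∈ blochSubspace 0 :=
  comp₂_mem_blochSubspace_zero (fun z w => z ^ 2 + w ^ 2)
    (one_add_dA_Hqp_mem_blochSubspace k hη) (dA_mem_blochSubspace k hη)

theorem kappaF_mem_blochSubspace (hη : η ∈ blochSubspace 0) : kappaF k η ∈ blochSubspace 0 := by
  have hη' := dA_mem_blochSubspace k hη
  have hξ' := dA_mem_blochSubspace k (Hqp_mem_blochSubspace k hη)
  have numerator_mem := sub_mem
    (zero_mul_mem_blochSubspace (one_add_dA_Hqp_mem_blochSubspace k hη)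
      (dA_mem_blochSubspace k hη'))
    (zero_mul_mem_blochSubspace hη' (dA_mem_blochSubspace k hξ'))
  exact comp₂_mem_blochSubspace_zero (fun z w => z / w ^ ((3 : ℂ) / 2)) numerator_mem
    (JF_mem_blochSubspace k hη)

theorem JdotF_mem_blochSubspace (hη : η ∈ blochSubspace 0) (hηd : ηd ∈ blochSubspace l) :
    JdotF k η ηd ∈ blochSubspace l := by
  have hξd' := dA_mem_blochSubspace k (Hqp_mem_blochSubspace k hηd)
  exact Submodule.smul_mem _ 2 (add_mem
    (zero_mul_mem_blochSubspace (one_add_dA_Hqp_mem_blochSubspace k hη) hξd')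
    (zero_mul_mem_blochSubspace (dA_mem_blochSubspace k hη) (dA_mem_blochSubspace k hηd)))

theorem kappadotF_mem_blochSubspace (hη : η ∈ blochSubspace 0) (hηd : ηd ∈ blochSubspace l) :
    kappadotF k η ηd ∈ blochSubspace l := by
  have hJ := JF_mem_blochSubspace k hη
  have hη' := dA_mem_blochSubspace k hη
  have hξ' := dA_mem_blochSubspace k (Hqp_mem_blochSubspace k hη)
  have hηd' := dA_mem_blochSubspace k hηd
  have hξd' := dA_mem_blochSubspace k (Hqp_mem_blochSubspace k hηd)
  have numerator_variation_mem := sub_mem (sub_mem (add_mem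
    (zero_mul_mem_blochSubspace (dA_mem_blochSubspace k hη') hξd')
    (zero_mul_mem_blochSubspace (one_add_dA_Hqp_mem_blochSubspace k hη)
      (dA_mem_blochSubspace k hηd')))
    (zero_mul_mem_blochSubspace (dA_mem_blochSubspace k hξ') hηd'))
    (zero_mul_mem_blochSubspace hη' (dA_mem_blochSubspace k hξd'))
  exact add_mem
    (zero_mul_mem_blochSubspace
      (comp₂_mem_blochSubspace_zero (fun z w => -(3 * z / (2 * w)))
        (kappaF_mem_blochSubspace k hη) hJ)
      (JdotF_mem_blochSubspace k hη hηd))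
    (zero_mul_mem_blochSubspace
      (comp_mem_blochSubspace_zero (fun z => (z ^ ((3 : ℂ) / 2))⁻¹) hJ)
      numerator_variation_mem)

end Linearization

-- Three derivatives of `η` and `η̇` make the Fourier series of `ξ` and `ξ̇` twice differentiable.
theorem linearization_bloch_invariant_general (k g τ b : ℝ) {l : ℤ} {η ηd : ℝ × ℝ → ℂ}
    (hη : η ∈ blochSubspace 0) (hηC : ContDiff ℝ 3 η) (hJ : ∀ x, JF k η x ≠ 0)
    (hηd : ηd ∈ blochSubspace l) (hηdC : ContDiff ℝ 3 ηd) :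
    Lmap k g τ b η ηd 0 0 ∈ blochSubspace l := by
  have tension_mem : (fun x => (τ : ℂ) * kappadotF k η ηd x) ∈ blochSubspace l :=
    Submodule.smul_mem _ (τ : ℂ) (kappadotF_mem_blochSubspace k hη hηd)
  have gravity_mem : (fun x => (g : ℂ) * ηd x) ∈ blochSubspace l :=
    Submodule.smul_mem _ (g : ℂ) hηd
  have bernoulli_mem :
      (fun x => (b : ℂ) / (2 * JF k η x ^ 2) * JdotF k η ηd x) ∈ blochSubspace l :=
    zero_mul_mem_blochSubspace
      (comp_mem_blochSubspace_zero (fun z => (b : ℂ) / (2 * z ^ 2)) (JF_mem_blochSubspace k hη))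
      (JdotF_mem_blochSubspace k hη hηd)
  refine Pproj_mem_blochSubspace ?_
  simp only [zero_div, mul_zero, zero_sub, sub_zero]
  exact sub_mem (add_mem (neg_mem bernoulli_mem) gravity_mem) tension_mem

/-- Bloch invariance of the linearization about a periodic state: if
`η(α₁,α₂) = η̃(α₁)` with `η̃` real-analytic, real-valued and `2π`-periodic, and `J` is
nonvanishing, then for the plane-wave perturbation `η̇ = e^{i(l₁α₁ + l₂α₂)}` there is a
`2π`-periodic function `u` of one variable with
`L(η̇,0,0)(α₁,α₂) = u(α₁)·e^{i l₂ α₂}`; equivalently, every Fourier coefficient of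
`L(η̇,0,0)` whose second index differs from `l₂` vanishes.  Hence `L` leaves each Bloch
subspace `{f : f̂(j₁,j₂) = 0 for j₂ ≠ l₂}` invariant. -/
theorem linearization_bloch_invariant (k g τ b : ℝ)
    (hk : Irrational k) (hkpos : 0 < k)
    (ηt : ℝ → ℝ) (hηt : AnalyticOnNhd ℝ ηt Set.univ)
    (hper : Function.Periodic ηt (2 * Real.pi))
    (η : ℝ × ℝ → ℂ) (hη : ∀ x : ℝ × ℝ, η x = (ηt x.1 : ℂ))
    (hJ : ∀ x : ℝ × ℝ, JF k η x ≠ 0)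
    (l₁ l₂ : ℤ) :
    (∃ u : ℝ → ℂ, Function.Periodic u (2 * Real.pi) ∧
      ∀ x : ℝ × ℝ,
        Lmap k g τ b η
            (fun y : ℝ × ℝ =>
              Complex.exp (Complex.I * ((l₁ : ℂ) * (y.1 : ℂ) + (l₂ : ℂ) * (y.2 : ℂ))))
            0 0 x =
          u x.1 * Complex.exp (Complex.I * (l₂ : ℂ) * (x.2 : ℂ))) ∧
    ∀ j : ℤ × ℤ, j.2 ≠ l₂ →
      fcoeff
        (Lmap k g τ b η
          (fun y : ℝ × ℝ =>
            Complex.exp (Complex.I * ((l₁ : ℂ) * (y.1 : ℂ) + (l₂ : ℂ) * (y.2 : ℂ))))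
          0 0) j = 0 := by
  have hη₀ : η ∈ blochSubspace 0 :=
    mem_blochSubspace_zero_iff.2 ⟨_, hper.comp Complex.ofReal, hη⟩
  have hηC : ContDiff ℝ 3 η :=
    funext hη ▸ Complex.ofRealCLM.contDiff.comp (hηt.contDiff.comp contDiff_fst)
  have hL := linearization_bloch_invariant_general k g τ b hη₀ hηC hJ
    (planeWave_mem_blochSubspace l₁ l₂) (contDiff_planeWave l₁ l₂)
  exact ⟨hL, fun _ hj => fcoeff_eq_zero_of_mem_blochSubspace hL hj⟩

end
end

section
/- Suppose η is a real-valued 2π×2π-periodic real-analytic function on ℝ² with J > 0 everywhere that satisfies R[η, τ, b] = 0 identically on ℝ². Then each of the four functions (α₁,α₂) ↦ η(α₁+π, α₂), (α₁,α₂) ↦ η(α₁, α₂+π), (α₁,α₂) ↦ η(α₁+π, α₂+π), and (α₁,α₂) ↦ η(−α₁, −α₂) also satisfies R[·, τ, b] = 0 identically (with the same τ and b). -/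
open MeasureTheory

noncomputable section

/-- The traveling-wave residual `R[η, τ, b] = P[ b/(2J) + g·η − τ·κ ]`. -/
def Residual (k g τ b : ℝ) (η : ℝ × ℝ → ℂ) : ℝ × ℝ → ℂ :=
  Pproj fun x => (b : ℂ) / (2 * JF k η x) + (g : ℂ) * η x - (τ : ℂ) * kappaF k η x

/-! The maps `x ↦ ε • x + v` with `ε = ±1` act on Fourier coefficients by `j ↦ ε • j` and a phase.
The symbol of `H` is odd, so `H` is equivariant up to the factor `ε`, and so is the first-order
operator `∂_α`. Every term of `J` and `κ` contains an even number of these factors. The integrand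
of the residual is therefore equivariant, and its mean is invariant because it is periodic. -/

section Periodic

theorem intervalIntegral_comp_units_smul_add_of_periodic {E : Type*} [NormedAddCommGroup E]
    [NormedSpace ℝ E] {f : ℝ → E} {T : ℝ} (hf : Function.Periodic f T) (ε : ℤˣ) (s : ℝ) :
    ∫ x in (0 : ℝ)..T, f (ε • x + s) = ∫ x in (0 : ℝ)..T, f x := by
  obtain rfl | rfl := Int.units_eq_one_or ε
  · simpa [add_comm T s] using hf.intervalIntegral_add_eq s 0
  · simpa [neg_add_eq_sub] using hf.intervalIntegral_add_eq (s - T) 0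

/-- Functions on `ℝ²` that descend to the torus `(ℝ / 2πℤ)²`. -/
def TorusPeriodic {E : Type*} (f : ℝ × ℝ → E) : Prop :=
  Function.Periodic f (2 * Real.pi, 0) ∧ Function.Periodic f (0, 2 * Real.pi)

namespace TorusPeriodic

variable {E : Type*} {f : ℝ × ℝ → E}

theorem comp_units_smul_add (hf : TorusPeriodic f) (ε : ℤˣ) (v : ℝ × ℝ) :
    TorusPeriodic fun x ↦ f (ε • x + v) := by
  have shift {w : ℝ × ℝ} (hw : Function.Periodic f w) :
      Function.Periodic (fun x ↦ f (ε • x + v)) w := fun x ↦ by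
    have hεw : Function.Periodic f (ε • w) := by
      obtain rfl | rfl := Int.units_eq_one_or ε
      · simpa using hw
      · simpa using hw.neg
    simpa only [smul_add, add_right_comm] using hεw (ε • x + v)
  exact ⟨shift hf.1, shift hf.2⟩

theorem mul [Mul E] {g : ℝ × ℝ → E} (hf : TorusPeriodic f) (hg : TorusPeriodic g) :
    TorusPeriodic fun x ↦ f x * g x :=
  ⟨hf.1.mul hg.1, hf.2.mul hg.2⟩

end TorusPeriodic

theorem meanT_const_mul (c : ℂ) (f : ℝ × ℝ → ℂ) : meanT (fun x ↦ c * f x) = c * meanT f := by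
  simp only [meanT, intervalIntegral.integral_const_mul]
  ring

theorem meanT_comp_units_smul_add {f : ℝ × ℝ → ℂ} (hf : TorusPeriodic f) (ε : ℤˣ) (v : ℝ × ℝ) :
    meanT (fun x ↦ f (ε • x + v)) = meanT f := by
  have inner (a : ℝ) : ∫ c in (0 : ℝ)..(2 * Real.pi), f (a, ε • c + v.2) =
      ∫ c in (0 : ℝ)..(2 * Real.pi), f (a, c) :=
    intervalIntegral_comp_units_smul_add_of_periodic (f := fun c ↦ f (a, c))
      (fun c ↦ by simpa using hf.2 (a, c)) ε v.2
  have outer : Function.Periodic (fun a ↦ ∫ c in (0 : ℝ)..(2 * Real.pi), f (a, c))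
      (2 * Real.pi) := fun a ↦
    intervalIntegral.integral_congr fun c _ ↦ by simpa using hf.1 (a, c)
  simp only [meanT, Prod.smul_mk, Prod.add_def, inner,
    intervalIntegral_comp_units_smul_add_of_periodic outer ε v.1]

end Periodic

section Fourier

/-- The character `x ↦ exp (i j·x)` of the torus. -/
def torusChar (j : ℤ × ℤ) (x : ℝ × ℝ) : ℂ :=
  Complex.exp (Complex.I * ((j.1 : ℂ) * (x.1 : ℂ) + (j.2 : ℂ) * (x.2 : ℂ)))

theorem torusChar_add (j : ℤ × ℤ) (x y : ℝ × ℝ) :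
    torusChar j (x + y) = torusChar j x * torusChar j y := by
  simp only [torusChar, ← Complex.exp_add, Prod.fst_add, Prod.snd_add]
  push_cast
  ring_nf

theorem torusChar_neg_mul_self (j : ℤ × ℤ) (x : ℝ × ℝ) :
    torusChar (-j) x * torusChar j x = 1 := by
  rw [torusChar, torusChar, ← Complex.exp_add, Complex.exp_eq_one_iff]
  exact ⟨0, by simp only [Prod.fst_neg, Prod.snd_neg, Int.cast_neg]; push_cast; ring⟩

theorem torusChar_units_smul (ε : ℤˣ) (j : ℤ × ℤ) (x : ℝ × ℝ) :
    torusChar (ε • j) x = torusChar j (ε • x) := by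
  obtain rfl | rfl := Int.units_eq_one_or ε <;> simp [torusChar]

theorem torusPeriodic_torusChar (j : ℤ × ℤ) : TorusPeriodic (torusChar j) := by
  constructor <;> intro x <;> rw [torusChar, torusChar, Complex.exp_eq_exp_iff_exists_int]
  · exact ⟨j.1, by simp only [Prod.fst_add, Prod.snd_add, add_zero]; push_cast; ring⟩
  · exact ⟨j.2, by simp only [Prod.fst_add, Prod.snd_add, add_zero]; push_cast; ring⟩

theorem fcoeff_eq_meanT (f : ℝ × ℝ → ℂ) (j : ℤ × ℤ) :
    fcoeff f j = meanT fun x ↦ f x * torusChar (-j) x := by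
  simp only [fcoeff, meanT, torusChar, Prod.fst_neg, Prod.snd_neg, Int.cast_neg, neg_mul,
    mul_neg, ← neg_add]

theorem fcoeff_comp_units_smul_add {f : ℝ × ℝ → ℂ} (hf : TorusPeriodic f) (ε : ℤˣ) (v : ℝ × ℝ)
    (j : ℤ × ℤ) :
    fcoeff (fun x ↦ f (ε • x + v)) j = torusChar (ε • j) v * fcoeff f (ε • j) := by
  have phase (x : ℝ × ℝ) :
      torusChar (-j) x = torusChar (ε • j) v * torusChar (-(ε • j)) (ε • x + v) := by
    rw [torusChar_add, mul_left_comm, mul_comm (torusChar (ε • j) v), torusChar_neg_mul_self,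
      mul_one, ← smul_neg, torusChar_units_smul, smul_smul, Int.units_mul_self, one_smul]
  simp only [fcoeff_eq_meanT, phase, mul_left_comm (f _), meanT_const_mul]
  rw [meanT_comp_units_smul_add (f := fun y ↦ f y * torusChar (-(ε • j)) y)
    (hf.mul (torusPeriodic_torusChar _))]

theorem sign_units_smul (ε : ℤˣ) (r : ℝ) : Real.sign (ε • r) = ε • Real.sign r := by
  obtain rfl | rfl := Int.units_eq_one_or ε <;> simp [Real.sign_neg]

theorem hqp_comp_units_smul_add (k : ℝ) {f : ℝ × ℝ → ℂ} (hf : TorusPeriodic f) (ε : ℤˣ)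
    (v : ℝ × ℝ) :
    Hqp k (fun x ↦ f (ε • x + v)) = fun x ↦ ε • Hqp k f (ε • x + v) := by
  have symbol (j : ℤ × ℤ) : ((ε • j).1 : ℝ) + k * ((ε • j).2 : ℝ) = ε • (j.1 + k * j.2 : ℝ) := by
    obtain rfl | rfl := Int.units_eq_one_or ε <;> simp
  have term (j : ℤ × ℤ) (x : ℝ × ℝ) :
      torusChar j v * torusChar (ε • j) x = torusChar j (ε • x + v) := by
    rw [torusChar_add, torusChar_units_smul, mul_comm]
  funext x
  calc Hqp k (fun x ↦ f (ε • x + v)) x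
      = ∑' j : ℤ × ℤ, -Complex.I * (Real.sign (j.1 + k * j.2) : ℂ) *
          fcoeff (fun x ↦ f (ε • x + v)) j * torusChar j x := rfl
    _ = ∑' j : ℤ × ℤ, -Complex.I * (Real.sign ((ε • j).1 + k * (ε • j).2) : ℂ) *
          fcoeff (fun x ↦ f (ε • x + v)) (ε • j) * torusChar (ε • j) x :=
        ((MulAction.toPerm ε).tsum_eq _).symm
    _ = ∑' j : ℤ × ℤ, ε • (-Complex.I * (Real.sign (j.1 + k * j.2) : ℂ) * fcoeff f j *
          torusChar j (ε • x + v)) := by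
        refine tsum_congr fun j ↦ ?_
        rw [symbol, sign_units_smul, fcoeff_comp_units_smul_add hf, smul_smul,
          Int.units_mul_self, one_smul, ← term]
        obtain rfl | rfl := Int.units_eq_one_or ε <;>
          simp only [one_smul, Units.neg_smul, Complex.ofReal_neg] <;> ring
    _ = ε • Hqp k f (ε • x + v) := tsum_const_smul' ε

end Fourier

section Equivariance

theorem dA_comp_units_smul_add (k : ℝ) (f : ℝ × ℝ → ℂ) (ε : ℤˣ) (v : ℝ × ℝ) :
    dA k (fun x ↦ f (ε • x + v)) = fun x ↦ ε • dA k f (ε • x + v) := by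
  funext x
  obtain rfl | rfl := Int.units_eq_one_or ε
  · simp [dA, fderiv_comp_add_right]
  · have reflect := fderiv_comp_smul (𝕜 := ℝ) (f := fun y ↦ f (y + v)) (x := x) (-1)
    simp only [neg_smul, one_smul, fderiv_comp_add_right] at reflect
    simp [dA, reflect]

theorem dA_units_smul (k : ℝ) (ε : ℤˣ) (f : ℝ × ℝ → ℂ) :
    dA k (fun x ↦ ε • f x) = fun x ↦ ε • dA k f x := by
  funext x
  obtain rfl | rfl := Int.units_eq_one_or ε <;> simp [dA, fderiv_fun_neg]

variable (k g τ b : ℝ) {η : ℝ × ℝ → ℂ}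

theorem dA_hqp_comp_units_smul_add (hη : TorusPeriodic η) (ε : ℤˣ) (v : ℝ × ℝ) :
    dA k (Hqp k fun x ↦ η (ε • x + v)) = fun x ↦ dA k (Hqp k η) (ε • x + v) := by
  simp only [hqp_comp_units_smul_add k hη, dA_units_smul, dA_comp_units_smul_add, smul_smul,
    Int.units_mul_self, one_smul]

theorem jf_comp_units_smul_add (hη : TorusPeriodic η) (ε : ℤˣ) (v : ℝ × ℝ) :
    JF k (fun x ↦ η (ε • x + v)) = fun x ↦ JF k η (ε • x + v) := by
  funext x
  simp only [JF, dA_hqp_comp_units_smul_add k hη, dA_comp_units_smul_add, sq,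
    smul_mul_smul_comm, Int.units_mul_self, one_smul]

theorem kappaF_comp_units_smul_add (hη : TorusPeriodic η) (ε : ℤˣ) (v : ℝ × ℝ) :
    kappaF k (fun x ↦ η (ε • x + v)) = fun x ↦ kappaF k η (ε • x + v) := by
  funext x
  simp only [kappaF, jf_comp_units_smul_add k hη, dA_hqp_comp_units_smul_add k hη,
    dA_comp_units_smul_add, dA_units_smul, smul_mul_smul_comm, smul_smul, Int.units_mul_self,
    one_smul]

/-- The integrand `b/(2J) + g·η − τ·κ` of the traveling-wave residual, before its mean is
removed. -/
def residualDensity (η : ℝ × ℝ → ℂ) : ℝ × ℝ → ℂ := fun x ↦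
  (b : ℂ) / (2 * JF k η x) + (g : ℂ) * η x - (τ : ℂ) * kappaF k η x

theorem residual_eq_pproj_residualDensity (η : ℝ × ℝ → ℂ) :
    Residual k g τ b η = Pproj (residualDensity k g τ b η) := rfl

theorem residualDensity_comp_units_smul_add (hη : TorusPeriodic η) (ε : ℤˣ) (v : ℝ × ℝ) :
    residualDensity k g τ b (fun x ↦ η (ε • x + v)) =
      fun x ↦ residualDensity k g τ b η (ε • x + v) := by
  funext x
  simp only [residualDensity, jf_comp_units_smul_add k hη, kappaF_comp_units_smul_add k hη]

theorem torusPeriodic_residualDensity (hη : TorusPeriodic η) :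
    TorusPeriodic (residualDensity k g τ b η) := by
  have periodic {w : ℝ × ℝ} (hw : Function.Periodic η w) :
      Function.Periodic (residualDensity k g τ b η) w := fun x ↦ by
    simpa [hw _] using (congrFun (residualDensity_comp_units_smul_add k g τ b hη 1 w) x).symm
  exact ⟨periodic hη.1, periodic hη.2⟩

theorem residual_comp_units_smul_add (hη : TorusPeriodic η) (ε : ℤˣ) (v : ℝ × ℝ) :
    Residual k g τ b (fun x ↦ η (ε • x + v)) = fun x ↦ Residual k g τ b η (ε • x + v) := by
  funext x
  simp only [residual_eq_pproj_residualDensity, residualDensity_comp_units_smul_add k g τ b hη,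
    Pproj, meanT_comp_units_smul_add (torusPeriodic_residualDensity k g τ b hη)]

end Equivariance

section TravelingWave

open scoped ContDiff

/-- Smooth solutions on the torus of the traveling-wave equation `R[η, τ, b] = 0`. Smoothness makes
the series for `H[η]` and its derivatives converge. The values of `η` may be complex; `J` then has
to avoid `0` and the branch cut of `J ^ (3/2)`, which for real `η` means `J > 0`. -/
structure IsTravelingWave (k g τ b : ℝ) (η : ℝ × ℝ → ℂ) : Prop where
  torusPeriodic : TorusPeriodic η
  contDiff : ContDiff ℝ ∞ η
  jf_mem_slitPlane : ∀ x, JF k η x ∈ Complex.slitPlane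
  residual_eq_zero : ∀ x, Residual k g τ b η x = 0

theorem residual_symmetries_general {k g τ b : ℝ} {η : ℝ × ℝ → ℂ}
    (h : IsTravelingWave k g τ b η) (ε : ℤˣ) (v : ℝ × ℝ) :
    IsTravelingWave k g τ b fun x ↦ η (ε • x + v) where
  torusPeriodic := h.torusPeriodic.comp_units_smul_add ε v
  contDiff := h.contDiff.comp ((contDiff_id.const_smul ε).add contDiff_const)
  jf_mem_slitPlane x := by
    rw [jf_comp_units_smul_add k h.torusPeriodic]
    exact h.jf_mem_slitPlane _
  residual_eq_zero x := by
    rw [residual_comp_units_smul_add k g τ b h.torusPeriodic]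
    exact h.residual_eq_zero _

end TravelingWave

/-- Symmetries of traveling-wave solutions: if `η` is a real-valued, `2π×2π`-periodic,
real-analytic solution of `R[η, τ, b] = 0` with `J > 0` everywhere, then the translates
`η(α₁+π, α₂)`, `η(α₁, α₂+π)`, `η(α₁+π, α₂+π)` and the reflection `η(−α₁, −α₂)` are also
solutions with the same `τ` and `b`. -/
theorem residual_symmetries (k g τ b : ℝ) (hk : Irrational k) (hkpos : 0 < k)
    (η : ℝ × ℝ → ℂ)
    (hreal : ∀ x : ℝ × ℝ, (η x).im = 0)
    (hper₁ : ∀ x : ℝ × ℝ, η (x.1 + 2 * Real.pi, x.2) = η x)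
    (hper₂ : ∀ x : ℝ × ℝ, η (x.1, x.2 + 2 * Real.pi) = η x)
    (hanalytic : AnalyticOnNhd ℝ η Set.univ)
    (hJ : ∀ x : ℝ × ℝ, 0 < (JF k η x).re ∧ (JF k η x).im = 0)
    (hsol : ∀ x : ℝ × ℝ, Residual k g τ b η x = 0) :
    (∀ x : ℝ × ℝ, Residual k g τ b (fun y : ℝ × ℝ => η (y.1 + Real.pi, y.2)) x = 0) ∧
    (∀ x : ℝ × ℝ, Residual k g τ b (fun y : ℝ × ℝ => η (y.1, y.2 + Real.pi)) x = 0) ∧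
    (∀ x : ℝ × ℝ, Residual k g τ b (fun y : ℝ × ℝ => η (y.1 + Real.pi, y.2 + Real.pi)) x = 0) ∧
    (∀ x : ℝ × ℝ, Residual k g τ b (fun y : ℝ × ℝ => η (-y.1, -y.2)) x = 0) := by
  have h : IsTravelingWave k g τ b η :=
    ⟨⟨fun x ↦ by simpa [Prod.add_def] using hper₁ x, fun x ↦ by simpa [Prod.add_def] using hper₂ x⟩,
      hanalytic.contDiff, fun x ↦ Or.inl (hJ x).1, hsol⟩
  have sol (ε : ℤˣ) (v : ℝ × ℝ) := (residual_symmetries_general h ε v).residual_eq_zero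
  exact ⟨by simpa [Prod.add_def] using sol 1 (Real.pi, 0),
    by simpa [Prod.add_def] using sol 1 (0, Real.pi),
    by simpa [Prod.add_def] using sol 1 (Real.pi, Real.pi),
    (by simpa using sol (-1) 0 : ∀ x, Residual k g τ b (fun y ↦ η (-y)) x = 0)⟩

end
end
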